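/- (Neyman near-orthogonality of the AIPW score along linear nuisance paths.) Let g1, g0 : 𝒳 → ℝ be bounded measurable and m : 𝒳 → ℝ measurable with ε ≤ m ≤ 1 − ε. For r ∈ [0,1] define the path nuisances m_r := m₀ + r(m − m₀), g1_r := g₀1 + r(g1 − g₀1), g0_r := g₀0 + r(g0 − g₀0) (note ε ≤ m_r ≤ 1 − ε). Then for every r ∈ [0,1], E[ψ(g1_r, g0_r, m_r)] = r² · E[(m(X) − m₀(X)) · ((g1(X) − g₀1(X)) / m_r(X) + (g0(X) − g₀0(X)) / (1 − m_r(X)))]; consequently |E[ψ(g1_r, g0_r, m_r)]| ≤ r² · ε^{-1} · ‖(m − m₀) ∘ X‖_{L²(P)} · (‖(g1 − g₀1) ∘ X‖_{L²(P)} + ‖(g0 − g₀0) ∘ X‖_{L²(P)}), so the map r ↦ E[ψ(g1_r, g0_r, m_r)] vanishes to second order at r = 0. -/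

import Mathlib

open MeasureTheory

/-!
Each arm of the AIPW score is affine in `(D, D * Y)` with coefficients that depend on `X` only, so
its mean does not change when `D` and `D * Y` are replaced by their conditional expectations `m₀`
and `m₀ * g₀1`. What remains is algebra: after this replacement, the treated arm exceeds `g₀1`
by `(m - m₀) * (g1 - g₀1) / m`, and likewise for the untreated arm. For fixed denominators, the mean
score is thus bilinear in the nuisance errors; along a linear path both errors carry a factor `r`,
and Cauchy–Schwarz bounds the remaining integral.
-/

lemma abs_div_le_inv_mul_abs {K : Type*} [Field K] [LinearOrder K] [IsStrictOrderedRing K]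
    {x p ε : K} (hε : 0 < ε) (hp : ε ≤ p) : |x / p| ≤ ε⁻¹ * |x| := by
  rw [abs_div, abs_of_pos (hε.trans_le hp), div_eq_inv_mul]
  gcongr

section Integrals

variable {Ω : Type*} {𝓖 mΩ : MeasurableSpace Ω} {P : Measure Ω} {ε : ℝ}

lemma integrable_div_of_le {f p : Ω → ℝ} (hε : 0 < ε) (hf : Integrable f P)
    (hpm : AEStronglyMeasurable p P) (hp : ∀ ω, ε ≤ p ω) : Integrable (fun ω => f ω / p ω) P :=
  (hf.norm.const_mul ε⁻¹).mono' (hf.aestronglyMeasurable.div₀ hpm)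
    (.of_forall fun ω => abs_div_le_inv_mul_abs hε (hp ω))

lemma integral_abs_mul_abs_le_sqrt_mul_sqrt {a b : Ω → ℝ} (ha : MemLp a 2 P) (hb : MemLp b 2 P) :
    ∫ ω, |a ω| * |b ω| ∂P ≤ √(∫ ω, a ω ^ 2 ∂P) * √(∫ ω, b ω ^ 2 ∂P) := by
  have holder := integral_mul_norm_le_Lp_mul_Lq (μ := P) (f := a) (g := b)
    Real.HolderConjugate.two_two (by simpa using ha) (by simpa using hb)
  simpa [Real.sqrt_eq_rpow] using holder

lemma abs_integral_mul_div_add_div_le {a b c p q : Ω → ℝ} (hε : 0 < ε)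
    (ha : MemLp a 2 P) (hb : MemLp b 2 P) (hc : MemLp c 2 P)
    (hp : ∀ ω, ε ≤ p ω) (hq : ∀ ω, ε ≤ q ω) :
    |∫ ω, a ω * (b ω / p ω + c ω / q ω) ∂P|
      ≤ ε⁻¹ * √(∫ ω, a ω ^ 2 ∂P) * (√(∫ ω, b ω ^ 2 ∂P) + √(∫ ω, c ω ^ 2 ∂P)) := by
  have hab : Integrable (fun ω => |a ω| * |b ω|) P := ha.norm.integrable_mul hb.norm
  have hac : Integrable (fun ω => |a ω| * |c ω|) P := ha.norm.integrable_mul hc.norm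
  have pointwise (ω : Ω) : |a ω * (b ω / p ω + c ω / q ω)|
      ≤ ε⁻¹ * (|a ω| * |b ω| + |a ω| * |c ω|) := calc
    _ ≤ |a ω| * (|b ω / p ω| + |c ω / q ω|) := by
      rw [abs_mul]; gcongr; exact abs_add_le _ _
    _ ≤ |a ω| * (ε⁻¹ * |b ω| + ε⁻¹ * |c ω|) := by
      gcongr
      exacts [abs_div_le_inv_mul_abs hε (hp ω), abs_div_le_inv_mul_abs hε (hq ω)]
    _ = ε⁻¹ * (|a ω| * |b ω| + |a ω| * |c ω|) := by ring
  calc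
    |∫ ω, a ω * (b ω / p ω + c ω / q ω) ∂P|
    _ ≤ ∫ ω, ε⁻¹ * (|a ω| * |b ω| + |a ω| * |c ω|) ∂P :=
      abs_integral_le_integral_abs.trans <| integral_mono_of_nonneg
        (.of_forall fun _ => abs_nonneg _) ((hab.add hac).const_mul ε⁻¹) (.of_forall pointwise)
    _ = ε⁻¹ * (∫ ω, |a ω| * |b ω| ∂P + ∫ ω, |a ω| * |c ω| ∂P) := by
      rw [integral_const_mul, integral_add hab hac]
    _ ≤ ε⁻¹ * (√(∫ ω, a ω ^ 2 ∂P) * √(∫ ω, b ω ^ 2 ∂P)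
          + √(∫ ω, a ω ^ 2 ∂P) * √(∫ ω, c ω ^ 2 ∂P)) := by
      gcongr
      exacts [integral_abs_mul_abs_le_sqrt_mul_sqrt ha hb,
        integral_abs_mul_abs_le_sqrt_mul_sqrt ha hc]
    _ = ε⁻¹ * √(∫ ω, a ω ^ 2 ∂P) * (√(∫ ω, b ω ^ 2 ∂P) + √(∫ ω, c ω ^ 2 ∂P)) := by ring

lemma integral_div_eq_of_ae_eq_condExp {Z c p : Ω → ℝ} (h𝓖 : 𝓖 ≤ mΩ)
    [SigmaFinite (P.trim h𝓖)] (hZ : Integrable Z P) (hc : c =ᵐ[P] P[Z | 𝓖])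
    (hp : StronglyMeasurable[𝓖] p) (hZp : Integrable (fun ω => Z ω / p ω) P) :
    ∫ ω, Z ω / p ω ∂P = ∫ ω, c ω / p ω ∂P := by
  have pull_out : P[fun ω => Z ω / p ω | 𝓖] =ᵐ[P] fun ω => P[Z | 𝓖] ω / p ω := by
    simp only [div_eq_mul_inv] at hZp ⊢
    exact condExp_mul_of_stronglyMeasurable_right hp.inv₀ hZp hZ
  rw [← integral_condExp h𝓖]
  refine integral_congr_ae ?_
  filter_upwards [pull_out, hc] with ω hpull hω
  rw [hpull, hω]

lemma one_sub_ae_eq_condExp [IsFiniteMeasure P] {T π : Ω → ℝ} (h𝓖 : 𝓖 ≤ mΩ) (hT : Integrable T P)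
    (hπ : π =ᵐ[P] P[T | 𝓖]) : 1 - π =ᵐ[P] P[1 - T | 𝓖] := by
  have h1 : P[(1 : Ω → ℝ) | 𝓖] = 1 := condExp_const h𝓖 (1 : ℝ)
  filter_upwards [condExp_sub (integrable_const (1 : ℝ)) hT 𝓖, hπ] with ω hsub hω
  refine Eq.trans ?_ hsub.symm
  exact congrArg₂ (· - ·) (congrFun h1 ω).symm hω

end Integrals

section Score

variable {Ω : Type*}

/-- One arm of the AIPW score: the regression `g` for the outcome `Y`, corrected by its residual on
the units selected by `T`, inversely weighted by the propensity `p`. The untreated arm is obtained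
from `1 - D` and `1 - m`. -/
noncomputable def aipwArm (T Y g p : Ω → ℝ) (ω : Ω) : ℝ :=
  g ω + T ω / p ω * (Y ω - g ω)

/-- The AIPW score `ψ(g1, g0, m)` for the average treatment effect `θ`; nuisances are functions on
the sample space, so that `g1` stands for the paper's `g1 ∘ X`. -/
noncomputable def aipwScore (D Y g1 g0 m : Ω → ℝ) (θ : ℝ) (ω : Ω) : ℝ :=
  (g1 ω - g0 ω) + D ω / m ω * (Y ω - g1 ω) - (1 - D ω) / (1 - m ω) * (Y ω - g0 ω) - θ

/-- Given the covariate information `𝓖`, the arm with treatment weight `T` has propensity `π` and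
outcome regression `g₀` for the outcome `Y`. The paper's `T` is the indicator `D` or `1 - D`; the
regression enters through the conditional mean `π * g₀` of `T * Y`, so no conditioning on `T` is
needed. -/
structure IsArmModel {mΩ : MeasurableSpace Ω} (P : Measure Ω) (𝓖 : MeasurableSpace Ω)
    (T Y π g₀ : Ω → ℝ) : Prop where
  integrable_weight : Integrable T P
  integrable_weight_mul_outcome : Integrable (fun ω => T ω * Y ω) P
  propensity_ae_eq : π =ᵐ[P] P[T | 𝓖]
  propensity_mul_regression_ae_eq :
    (fun ω => π ω * g₀ ω) =ᵐ[P] P[fun ω => T ω * Y ω | 𝓖]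

lemma aipwScore_eq_aipwArm_sub (D Y g1 g0 m : Ω → ℝ) (θ : ℝ) (ω : Ω) :
    aipwScore D Y g1 g0 m θ ω = aipwArm D Y g1 m ω - aipwArm (1 - D) Y g0 (1 - m) ω - θ := by
  simp only [aipwScore, aipwArm, Pi.sub_apply, Pi.one_apply]
  ring

lemma aipwArm_eq_add_div (T Y g p : Ω → ℝ) (ω : Ω) :
    aipwArm T Y g p ω = g ω + T ω * (Y ω - g ω) / p ω := by
  rw [aipwArm, div_mul_eq_mul_div]

lemma aipwArm_sub_eq_div {π g₀ g p : Ω → ℝ} {ω : Ω} (hp : p ω ≠ 0) :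
    aipwArm π g₀ g p ω - g₀ ω = (p ω - π ω) * (g ω - g₀ ω) / p ω := by
  rw [aipwArm]
  field_simp
  ring

variable {𝓖 mΩ : MeasurableSpace Ω} {P : Measure Ω} {ε : ℝ}

lemma integrable_aipwArm {T Y g p : Ω → ℝ} (hε : 0 < ε) (hg : Integrable g P)
    (hres : Integrable (fun ω => T ω * (Y ω - g ω)) P) (hpm : AEStronglyMeasurable p P)
    (hp : ∀ ω, ε ≤ p ω) : Integrable (aipwArm T Y g p) P :=
  (hg.add (integrable_div_of_le hε hres hpm hp)).congr
    (.of_forall fun ω => (aipwArm_eq_add_div T Y g p ω).symm)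

namespace IsArmModel

variable {T Y π g₀ g p : Ω → ℝ}

lemma integrable_residual (hA : IsArmModel P 𝓖 T Y π g₀)
    (hTg : Integrable (fun ω => T ω * g ω) P) : Integrable (fun ω => T ω * (Y ω - g ω)) P := by
  simp only [mul_sub]
  exact hA.integrable_weight_mul_outcome.sub hTg

lemma residual_ae_eq_condExp (hA : IsArmModel P 𝓖 T Y π g₀)
    (hTg : Integrable (fun ω => T ω * g ω) P) (hg : StronglyMeasurable[𝓖] g) :
    (fun ω => π ω * (g₀ ω - g ω)) =ᵐ[P] P[fun ω => T ω * (Y ω - g ω) | 𝓖] := by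
  have pull_out := condExp_mul_of_stronglyMeasurable_right hg hTg hA.integrable_weight
  simp only [mul_sub]
  filter_upwards [condExp_sub hA.integrable_weight_mul_outcome hTg 𝓖, pull_out,
    hA.propensity_ae_eq, hA.propensity_mul_regression_ae_eq] with ω hsub hpull hπ hg₀
  refine Eq.trans ?_ hsub.symm
  exact congrArg₂ (· - ·) hg₀ ((congrArg (· * g ω) hπ).trans hpull.symm)

lemma integrable_condExp_residual (hA : IsArmModel P 𝓖 T Y π g₀)
    (hTg : Integrable (fun ω => T ω * g ω) P) (hg : StronglyMeasurable[𝓖] g) :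
    Integrable (fun ω => π ω * (g₀ ω - g ω)) P :=
  integrable_condExp.congr (hA.residual_ae_eq_condExp hTg hg).symm

lemma integrable_bias (hA : IsArmModel P 𝓖 T Y π g₀) (h𝓖 : 𝓖 ≤ mΩ) (hε : 0 < ε)
    (hTg : Integrable (fun ω => T ω * g ω) P) (hg : StronglyMeasurable[𝓖] g)
    (hgi : Integrable g P) (hg₀i : Integrable g₀ P)
    (hpm : StronglyMeasurable[𝓖] p) (hp : ∀ ω, ε ≤ p ω) :
    Integrable (fun ω => (p ω - π ω) * (g ω - g₀ ω) / p ω) P :=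
  ((integrable_aipwArm hε hgi (hA.integrable_condExp_residual hTg hg)
    (hpm.mono h𝓖).aestronglyMeasurable hp).sub hg₀i).congr
    (.of_forall fun ω => aipwArm_sub_eq_div (hε.trans_le (hp ω)).ne')

lemma integral_aipwArm_sub (hA : IsArmModel P 𝓖 T Y π g₀) (h𝓖 : 𝓖 ≤ mΩ)
    [SigmaFinite (P.trim h𝓖)] (hε : 0 < ε)
    (hTg : Integrable (fun ω => T ω * g ω) P) (hg : StronglyMeasurable[𝓖] g)
    (hgi : Integrable g P) (hg₀i : Integrable g₀ P)
    (hpm : StronglyMeasurable[𝓖] p) (hp : ∀ ω, ε ≤ p ω) :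
    ∫ ω, aipwArm T Y g p ω ∂P - ∫ ω, g₀ ω ∂P
      = ∫ ω, (p ω - π ω) * (g ω - g₀ ω) / p ω ∂P := by
  have hpm' : AEStronglyMeasurable p P := (hpm.mono h𝓖).aestronglyMeasurable
  have hres := hA.integrable_residual hTg
  have hcond := hA.integrable_condExp_residual hTg hg
  have hres_div := integrable_div_of_le hε hres hpm' hp
  have replace_by_condExp : ∫ ω, aipwArm T Y g p ω ∂P = ∫ ω, aipwArm π g₀ g p ω ∂P := by
    simp only [aipwArm_eq_add_div]
    rw [integral_add hgi hres_div, integral_add hgi (integrable_div_of_le hε hcond hpm' hp),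
      integral_div_eq_of_ae_eq_condExp h𝓖 hres (hA.residual_ae_eq_condExp hTg hg) hpm hres_div]
  rw [replace_by_condExp, ← integral_sub (integrable_aipwArm hε hgi hcond hpm' hp) hg₀i]
  exact integral_congr_ae (.of_forall fun ω => aipwArm_sub_eq_div (hε.trans_le (hp ω)).ne')

end IsArmModel

lemma integral_aipwScore [IsProbabilityMeasure P] (h𝓖 : 𝓖 ≤ mΩ) {D Y m₀ g₀1 g₀0 g1 g0 m : Ω → ℝ}
    (hA1 : IsArmModel P 𝓖 D Y m₀ g₀1) (hA0 : IsArmModel P 𝓖 (1 - D) Y (1 - m₀) g₀0)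
    (hg₀1i : Integrable g₀1 P) (hg₀0i : Integrable g₀0 P)
    (hg1 : StronglyMeasurable[𝓖] g1) (hg0 : StronglyMeasurable[𝓖] g0)
    (hg1i : Integrable g1 P) (hg0i : Integrable g0 P)
    (hDg1 : Integrable (fun ω => D ω * g1 ω) P) (hDg0 : Integrable (fun ω => (1 - D) ω * g0 ω) P)
    (hε : 0 < ε) (hm : StronglyMeasurable[𝓖] m) (hmbd : ∀ ω, m ω ∈ Set.Icc ε (1 - ε)) :
    ∫ ω, aipwScore D Y g1 g0 m (∫ ω, (g₀1 ω - g₀0 ω) ∂P) ω ∂P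
      = ∫ ω, (m ω - m₀ ω) * ((g1 ω - g₀1 ω) / m ω + (g0 ω - g₀0 ω) / (1 - m ω)) ∂P := by
  have hm' : StronglyMeasurable[𝓖] (1 - m) := stronglyMeasurable_one.sub hm
  have hm_le (ω : Ω) : ε ≤ m ω := (hmbd ω).1
  have hm'_le (ω : Ω) : ε ≤ (1 - m) ω := le_sub_comm.1 (hmbd ω).2
  have arm1 := integrable_aipwArm hε hg1i (hA1.integrable_residual hDg1)
    (hm.mono h𝓖).aestronglyMeasurable hm_le
  have arm0 := integrable_aipwArm hε hg0i (hA0.integrable_residual hDg0)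
    (hm'.mono h𝓖).aestronglyMeasurable hm'_le
  calc
    _ = (∫ ω, aipwArm D Y g1 m ω ∂P - ∫ ω, aipwArm (1 - D) Y g0 (1 - m) ω ∂P)
          - (∫ ω, g₀1 ω ∂P - ∫ ω, g₀0 ω ∂P) := by
      rw [← integral_sub arm1 arm0, ← integral_sub hg₀1i hg₀0i,
        integral_congr_ae (.of_forall (aipwScore_eq_aipwArm_sub D Y g1 g0 m _))]
      exact (integral_sub (arm1.sub arm0) (integrable_const _)).trans (by simp)
    _ = ∫ ω, (m ω - m₀ ω) * (g1 ω - g₀1 ω) / m ω ∂P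
          - ∫ ω, ((1 - m) ω - (1 - m₀) ω) * (g0 ω - g₀0 ω) / (1 - m) ω ∂P := by
      rw [sub_sub_sub_comm, hA1.integral_aipwArm_sub h𝓖 hε hDg1 hg1 hg1i hg₀1i hm hm_le,
        hA0.integral_aipwArm_sub h𝓖 hε hDg0 hg0 hg0i hg₀0i hm' hm'_le]
    _ = _ := by
      rw [← integral_sub (hA1.integrable_bias h𝓖 hε hDg1 hg1 hg1i hg₀1i hm hm_le)
        (hA0.integrable_bias h𝓖 hε hDg0 hg0 hg0i hg₀0i hm' hm'_le)]
      congr with ω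
      simp only [Pi.sub_apply, Pi.one_apply]
      ring

lemma integral_aipwScore_path [IsProbabilityMeasure P] (h𝓖 : 𝓖 ≤ mΩ)
    {D Y m₀ g₀1 g₀0 g1 g0 m : Ω → ℝ} {r : ℝ} (hD : MemLp D 2 P)
    (hA1 : IsArmModel P 𝓖 D Y m₀ g₀1) (hA0 : IsArmModel P 𝓖 (1 - D) Y (1 - m₀) g₀0)
    (hg₀1 : StronglyMeasurable[𝓖] g₀1) (hg₀0 : StronglyMeasurable[𝓖] g₀0)
    (hg₀1L2 : MemLp g₀1 2 P) (hg₀0L2 : MemLp g₀0 2 P)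
    (hg1 : StronglyMeasurable[𝓖] g1) (hg0 : StronglyMeasurable[𝓖] g0)
    (hg1L2 : MemLp g1 2 P) (hg0L2 : MemLp g0 2 P) (hε : 0 < ε)
    (hm₀ : StronglyMeasurable[𝓖] m₀) (hm : StronglyMeasurable[𝓖] m)
    (hmr : ∀ ω, m₀ ω + r * (m ω - m₀ ω) ∈ Set.Icc ε (1 - ε)) :
    ∫ ω, aipwScore D Y (g₀1 + r • (g1 - g₀1)) (g₀0 + r • (g0 - g₀0)) (m₀ + r • (m - m₀))
        (∫ ω, (g₀1 ω - g₀0 ω) ∂P) ω ∂P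
      = r ^ 2 * ∫ ω, (m ω - m₀ ω) * ((g1 ω - g₀1 ω) / (m₀ ω + r * (m ω - m₀ ω))
          + (g0 ω - g₀0 ω) / (1 - (m₀ ω + r * (m ω - m₀ ω)))) ∂P := by
  have hg1r : MemLp (g₀1 + r • (g1 - g₀1)) 2 P := hg₀1L2.add ((hg1L2.sub hg₀1L2).const_smul r)
  have hg0r : MemLp (g₀0 + r • (g0 - g₀0)) 2 P := hg₀0L2.add ((hg0L2.sub hg₀0L2).const_smul r)
  rw [integral_aipwScore h𝓖 hA1 hA0 (hg₀1L2.integrable one_le_two)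
    (hg₀0L2.integrable one_le_two) (hg₀1.add ((hg1.sub hg₀1).const_smul r))
    (hg₀0.add ((hg0.sub hg₀0).const_smul r)) (hg1r.integrable one_le_two)
    (hg0r.integrable one_le_two) (hD.integrable_mul hg1r)
    (((memLp_const 1).sub hD).integrable_mul hg0r) hε (hm₀.add ((hm.sub hm₀).const_smul r)) hmr,
    ← integral_const_mul]
  congr with ω
  simp only [Pi.add_apply, Pi.smul_apply, Pi.sub_apply, smul_eq_mul, add_sub_cancel_left]
  ring

theorem aipw_neyman_orthogonality_path_general [IsProbabilityMeasure P] (h𝓖 : 𝓖 ≤ mΩ)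
    {D Y m₀ g₀1 g₀0 g1 g0 m : Ω → ℝ} {θ₀ r : ℝ} (hD : MemLp D 2 P)
    (hDY : Integrable (fun ω => D ω * Y ω) P) (hDY' : Integrable (fun ω => (1 - D ω) * Y ω) P)
    (hε : 0 < ε) (hm₀ : StronglyMeasurable[𝓖] m₀) (hm₀bd : ∀ ω, m₀ ω ∈ Set.Icc ε (1 - ε))
    (hm₀ver : m₀ =ᵐ[P] P[D | 𝓖])
    (hg₀1 : StronglyMeasurable[𝓖] g₀1) (hg₀0 : StronglyMeasurable[𝓖] g₀0)
    (hg₀1L2 : MemLp g₀1 2 P) (hg₀0L2 : MemLp g₀0 2 P)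
    (hg₀1ver : (fun ω => m₀ ω * g₀1 ω) =ᵐ[P] P[fun ω => D ω * Y ω | 𝓖])
    (hg₀0ver : (fun ω => (1 - m₀ ω) * g₀0 ω) =ᵐ[P] P[fun ω => (1 - D ω) * Y ω | 𝓖])
    (hθ₀ : θ₀ = ∫ ω, (g₀1 ω - g₀0 ω) ∂P)
    (hg1 : StronglyMeasurable[𝓖] g1) (hg0 : StronglyMeasurable[𝓖] g0)
    (hg1L2 : MemLp g1 2 P) (hg0L2 : MemLp g0 2 P)
    (hm : StronglyMeasurable[𝓖] m) (hmbd : ∀ ω, m ω ∈ Set.Icc ε (1 - ε))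
    (hr0 : 0 ≤ r) (hr1 : r ≤ 1) :
    ∫ ω, aipwScore D Y (g₀1 + r • (g1 - g₀1)) (g₀0 + r • (g0 - g₀0)) (m₀ + r • (m - m₀)) θ₀ ω ∂P
        = r ^ 2 * ∫ ω, (m ω - m₀ ω) * ((g1 ω - g₀1 ω) / (m₀ ω + r * (m ω - m₀ ω))
            + (g0 ω - g₀0 ω) / (1 - (m₀ ω + r * (m ω - m₀ ω)))) ∂P ∧
      |∫ ω, aipwScore D Y (g₀1 + r • (g1 - g₀1)) (g₀0 + r • (g0 - g₀0)) (m₀ + r • (m - m₀)) θ₀ ω ∂P|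
        ≤ r ^ 2 * ε⁻¹ * √(∫ ω, (m ω - m₀ ω) ^ 2 ∂P)
            * (√(∫ ω, (g1 ω - g₀1 ω) ^ 2 ∂P) + √(∫ ω, (g0 ω - g₀0 ω) ^ 2 ∂P)) := by
  have hA1 : IsArmModel P 𝓖 D Y m₀ g₀1 :=
    ⟨hD.integrable one_le_two, hDY, hm₀ver, hg₀1ver⟩
  have hA0 : IsArmModel P 𝓖 (1 - D) Y (1 - m₀) g₀0 :=
    ⟨((memLp_const 1).sub hD).integrable one_le_two, hDY',
      one_sub_ae_eq_condExp h𝓖 hA1.integrable_weight hm₀ver, hg₀0ver⟩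
  have hmr (ω : Ω) : m₀ ω + r * (m ω - m₀ ω) ∈ Set.Icc ε (1 - ε) :=
    (convex_Icc ε (1 - ε)).add_smul_sub_mem (hm₀bd ω) (hmbd ω) ⟨hr0, hr1⟩
  have hmL2 : MemLp m 2 P := memLp_of_bounded (.of_forall hmbd) (hm.mono h𝓖).aestronglyMeasurable 2
  have hm₀L2 : MemLp m₀ 2 P :=
    memLp_of_bounded (.of_forall hm₀bd) (hm₀.mono h𝓖).aestronglyMeasurable 2
  have bias := hθ₀ ▸ integral_aipwScore_path h𝓖 hD hA1 hA0 hg₀1 hg₀0 hg₀1L2 hg₀0L2 hg1 hg0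
    hg1L2 hg0L2 hε hm₀ hm hmr
  refine ⟨bias, ?_⟩
  rw [bias, abs_mul, abs_sq, mul_assoc (r ^ 2), mul_assoc (r ^ 2)]
  gcongr
  exact abs_integral_mul_div_add_div_le hε (hmL2.sub hm₀L2) (hg1L2.sub hg₀1L2)
    (hg0L2.sub hg₀0L2) (fun ω => (hmr ω).1) (fun ω => le_sub_comm.1 (hmr ω).2)

end Score

/-- Neyman near-orthogonality of the AIPW score along linear nuisance paths: the expected
score along the path vanishes to second order at `r = 0`. -/
theorem aipw_neyman_orthogonality_path
    {Ω 𝓧 : Type*} [MeasurableSpace Ω] [MeasurableSpace 𝓧]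
    (P : MeasureTheory.Measure Ω) [MeasureTheory.IsProbabilityMeasure P]
    (X : Ω → 𝓧) (hX : Measurable X)
    (D : Ω → ℝ) (hD : Measurable D) (hD01 : ∀ ω, D ω = 0 ∨ D ω = 1)
    (Y : Ω → ℝ) (hY : MeasureTheory.Integrable Y P)
    (hDY : MeasureTheory.Integrable (fun ω => D ω * Y ω) P)
    (hDY' : MeasureTheory.Integrable (fun ω => (1 - D ω) * Y ω) P)
    (ε : ℝ) (hε0 : 0 < ε) (hε : ε < 1 / 2)
    (m₀ : 𝓧 → ℝ) (hm₀ : Measurable m₀)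
    (hm₀bd : ∀ x, ε ≤ m₀ x ∧ m₀ x ≤ 1 - ε)
    (hm₀ver : (fun ω => m₀ (X ω)) =ᵐ[P] P[D | MeasurableSpace.comap X inferInstance])
    (g₀1 g₀0 : 𝓧 → ℝ) (hg₀1 : Measurable g₀1) (hg₀0 : Measurable g₀0)
    (C₀ : ℝ) (hg₀1bd : ∀ x, |g₀1 x| ≤ C₀) (hg₀0bd : ∀ x, |g₀0 x| ≤ C₀)
    (hg₀1ver : (fun ω => m₀ (X ω) * g₀1 (X ω))
      =ᵐ[P] P[fun ω => D ω * Y ω | MeasurableSpace.comap X inferInstance])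
    (hg₀0ver : (fun ω => (1 - m₀ (X ω)) * g₀0 (X ω))
      =ᵐ[P] P[fun ω => (1 - D ω) * Y ω | MeasurableSpace.comap X inferInstance])
    (θ₀ : ℝ) (hθ₀ : θ₀ = ∫ ω, (g₀1 (X ω) - g₀0 (X ω)) ∂P)
    (g1 g0 : 𝓧 → ℝ) (hg1 : Measurable g1) (hg0 : Measurable g0)
    (C₁ : ℝ) (hg1bd : ∀ x, |g1 x| ≤ C₁) (hg0bd : ∀ x, |g0 x| ≤ C₁)
    (m : 𝓧 → ℝ) (hm : Measurable m) (hmbd : ∀ x, ε ≤ m x ∧ m x ≤ 1 - ε) :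
    ∀ r : ℝ, 0 ≤ r → r ≤ 1 →
      (∫ ω, (((g₀1 (X ω) + r * (g1 (X ω) - g₀1 (X ω)))
              - (g₀0 (X ω) + r * (g0 (X ω) - g₀0 (X ω))))
          + (D ω / (m₀ (X ω) + r * (m (X ω) - m₀ (X ω))))
              * (Y ω - (g₀1 (X ω) + r * (g1 (X ω) - g₀1 (X ω))))
          - ((1 - D ω) / (1 - (m₀ (X ω) + r * (m (X ω) - m₀ (X ω)))))
              * (Y ω - (g₀0 (X ω) + r * (g0 (X ω) - g₀0 (X ω)))) - θ₀) ∂P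
        = r ^ 2 * ∫ ω, (m (X ω) - m₀ (X ω)) *
            ((g1 (X ω) - g₀1 (X ω)) / (m₀ (X ω) + r * (m (X ω) - m₀ (X ω)))
              + (g0 (X ω) - g₀0 (X ω))
                / (1 - (m₀ (X ω) + r * (m (X ω) - m₀ (X ω))))) ∂P) ∧
      |∫ ω, (((g₀1 (X ω) + r * (g1 (X ω) - g₀1 (X ω)))
              - (g₀0 (X ω) + r * (g0 (X ω) - g₀0 (X ω))))
          + (D ω / (m₀ (X ω) + r * (m (X ω) - m₀ (X ω))))
              * (Y ω - (g₀1 (X ω) + r * (g1 (X ω) - g₀1 (X ω))))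
          - ((1 - D ω) / (1 - (m₀ (X ω) + r * (m (X ω) - m₀ (X ω)))))
              * (Y ω - (g₀0 (X ω) + r * (g0 (X ω) - g₀0 (X ω)))) - θ₀) ∂P|
        ≤ r ^ 2 * ε⁻¹ * Real.sqrt (∫ ω, (m (X ω) - m₀ (X ω)) ^ 2 ∂P) *
            (Real.sqrt (∫ ω, (g1 (X ω) - g₀1 (X ω)) ^ 2 ∂P)
              + Real.sqrt (∫ ω, (g0 (X ω) - g₀0 (X ω)) ^ 2 ∂P)) := by
  have hDL2 : MemLp D 2 P := memLp_of_bounded (a := 0) (b := 1)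
    (.of_forall fun ω => by rcases hD01 ω with h | h <;> simp [h]) hD.aestronglyMeasurable 2
  have meas {h : 𝓧 → ℝ} (hh : Measurable h) :
      StronglyMeasurable[MeasurableSpace.comap X inferInstance] (h ∘ X) :=
    hh.stronglyMeasurable.comp_measurable (comap_measurable X)
  have memL2 {h : 𝓧 → ℝ} {C : ℝ} (hh : Measurable h) (hC : ∀ x, |h x| ≤ C) : MemLp (h ∘ X) 2 P :=
    .of_bound (hh.comp hX).aestronglyMeasurable C (.of_forall fun ω => hC (X ω))
  intro r hr0 hr1
  exact aipw_neyman_orthogonality_path_general hX.comap_le hDL2 hDY hDY' hε0 (meas hm₀)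
    (fun ω => hm₀bd (X ω)) hm₀ver (meas hg₀1) (meas hg₀0) (memL2 hg₀1 hg₀1bd)
    (memL2 hg₀0 hg₀0bd) hg₀1ver hg₀0ver hθ₀ (meas hg1) (meas hg0) (memL2 hg1 hg1bd)
    (memL2 hg0 hg0bd) (meas hm) (fun ω => hmbd (X ω)) hr0 hr1
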